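/- arXiv:2012.08609 — 3 statements merged into one kernel-verified Lean document; each statement's English description precedes it below -/
import Mathlib

section
/- Let A be a unital C*-algebra, let a ∈ A be self-adjoint, and let λ ∈ ℂ with Re λ > 0. Then the element iλ·1 − a is invertible in A and the resolvent is given by the absolutely convergent Bochner integral (iλ·1 − a)^{-1} = −i ∫_0^∞ e^{−uλ} exp(−i u a) du, where exp denotes the exponential in A. -/
open MeasureTheory

/-- For a self-adjoint element `a` of a unital C*-algebra and `λ ∈ ℂ` with `Re λ > 0`,
the element `iλ·1 − a` is invertible and its inverse is given by the absolutely convergent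
Bochner integral `−i ∫_0^∞ e^{−uλ} exp(−iua) du`. -/
theorem resolvent_as_laplace_transform
    {A : Type*} [NormedRing A] [StarRing A] [CStarRing A] [CompleteSpace A]
    [NormedAlgebra ℂ A] [StarModule ℂ A]
    (a : A) (ha : IsSelfAdjoint a) (l : ℂ) (hl : 0 < l.re) :
    ∃ b : A,
      IntegrableOn
        (fun u : ℝ => Complex.exp (-(u : ℂ) * l) •
          NormedSpace.exp ((-(Complex.I * (u : ℂ))) • a))
        (Set.Ioi (0 : ℝ)) ∧
      b = (-Complex.I) • ∫ u in Set.Ioi (0 : ℝ),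
            Complex.exp (-(u : ℂ) * l) •
              NormedSpace.exp ((-(Complex.I * (u : ℂ))) • a) ∧
      ((Complex.I * l) • (1 : A) - a) * b = 1 ∧
      b * ((Complex.I * l) • (1 : A) - a) = 1 := by
  rcases subsingleton_or_nontrivial A with hA | hA
  · refine ⟨_, ?_, rfl, Subsingleton.elim _ _, Subsingleton.elim _ _⟩
    refine (integrable_zero ℝ A _).congr (Filter.Eventually.of_forall fun x => Subsingleton.elim _ _)
  set f : ℝ → A := fun u : ℝ => Complex.exp (-(u : ℂ) * l) •
          NormedSpace.exp ((-(Complex.I * (u : ℂ))) • a) with hf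
  set c : A := -(l • (1 : A) + Complex.I • a) with hc
  have he : ∀ u : ℝ, HasDerivAt (fun u : ℝ => Complex.exp (-(u : ℂ) * l))
      (Complex.exp (-(u : ℂ) * l) * (-l)) u := by
    intro u
    have h1 : HasDerivAt (fun z : ℂ => -z * l) (-l) (u : ℂ) := by
      simpa using ((hasDerivAt_id (u : ℂ)).neg.mul_const l)
    exact h1.cexp.comp_ofReal
  have hrw : ∀ z : ℂ, (-(Complex.I * z)) • a = z • ((-Complex.I) • a) := by
    intro z
    rw [smul_smul]; congr 1; ring
  have hg : ∀ u : ℝ, HasDerivAt (fun u : ℝ => NormedSpace.exp ((-(Complex.I * (u : ℂ))) • a))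
      (NormedSpace.exp ((-(Complex.I * (u : ℂ))) • a) * ((-Complex.I) • a)) u := by
    intro u
    simp only [hrw]
    have h1 : HasDerivAt (fun u : ℝ => (u : ℂ)) 1 u := Complex.ofRealCLM.hasDerivAt
    have h2 := (hasDerivAt_exp_smul_const (𝕂 := ℂ) ((-Complex.I) • a) (u : ℂ)).scomp u h1
    rw [one_smul] at h2
    exact h2
  have hg' : ∀ u : ℝ, HasDerivAt (fun u : ℝ => NormedSpace.exp ((-(Complex.I * (u : ℂ))) • a))
      (((-Complex.I) • a) * NormedSpace.exp ((-(Complex.I * (u : ℂ))) • a)) u := by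
    intro u
    simp only [hrw]
    have h1 : HasDerivAt (fun u : ℝ => (u : ℂ)) 1 u := Complex.ofRealCLM.hasDerivAt
    have h2 := (hasDerivAt_exp_smul_const' (𝕂 := ℂ) ((-Complex.I) • a) (u : ℂ)).scomp u h1
    rw [one_smul] at h2
    exact h2
  have hd : ∀ u : ℝ, HasDerivAt f (f u * c) u := by
    intro u
    refine HasDerivAt.congr_deriv ((he u).smul (hg u)) ?_
    simp only [hf, hc, mul_neg, mul_add, smul_mul_assoc, mul_smul_comm, mul_one, neg_smul,
      smul_neg, neg_add, smul_smul]
    rw [add_comm, mul_comm l, mul_comm Complex.I (Complex.exp _)]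
  have hd' : ∀ u : ℝ, HasDerivAt f (c * f u) u := by
    intro u
    refine HasDerivAt.congr_deriv ((he u).smul (hg' u)) ?_
    simp only [hf, hc, neg_mul, add_mul, smul_mul_assoc, mul_smul_comm, one_mul, neg_smul,
      smul_neg, neg_add, smul_smul, mul_neg]
    rw [add_comm, smul_add, smul_neg, smul_neg, smul_smul, smul_smul]
  have hn : ∀ u : ℝ, ‖f u‖ = Real.exp (-l.re * u) := by
    intro u
    have hu : NormedSpace.exp ((-(Complex.I * (u : ℂ))) • a) ∈ unitary A := by
      let _ : NormedAlgebra ℚ A := NormedAlgebra.restrictScalars ℚ ℂ A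
      apply NormedSpace.exp_mem_unitary_of_mem_skewAdjoint
      apply ha.smul_mem_skewAdjoint
      rw [skewAdjoint.mem_iff]
      simp
    rw [hf]
    simp only [norm_smul, CStarRing.norm_of_mem_unitary hu, Complex.norm_exp]
    simp [mul_comm]
  have hcont : Continuous f := continuous_iff_continuousAt.2 fun u => (hd u).continuousAt
  have hint : IntegrableOn f (Set.Ioi 0) := by
    refine (exp_neg_integrableOn_Ioi 0 hl).mono' hcont.aestronglyMeasurable ?_
    exact Filter.Eventually.of_forall fun u => (hn u).le
  have ht : Filter.Tendsto f Filter.atTop (nhds 0) := by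
    rw [tendsto_zero_iff_norm_tendsto_zero]
    simp only [hn]
    refine Real.tendsto_exp_atBot.comp ?_
    exact Filter.tendsto_id.const_mul_atTop_of_neg (by linarith)
  have h0 : f 0 = 1 := by simp [hf]
  have hI : (∫ u in Set.Ioi (0 : ℝ), f u) * c = -1 := by
    have := integral_Ioi_of_hasDerivAt_of_tendsto' (fun x _ => hd x) (hint.mul_const c) ht
    rw [h0, zero_sub] at this
    rw [← this]
    exact (((ContinuousLinearMap.mul ℂ A).flip c).integral_comp_comm hint).symm
  have hI' : c * (∫ u in Set.Ioi (0 : ℝ), f u) = -1 := by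
    have := integral_Ioi_of_hasDerivAt_of_tendsto' (fun x _ => hd' x) (hint.const_mul c) ht
    rw [h0, zero_sub] at this
    rw [← this]
    exact ((ContinuousLinearMap.mul ℂ A c).integral_comp_comm hint).symm
  have hac : (Complex.I * l) • (1 : A) - a = (-Complex.I) • c := by
    simp [hc, smul_smul, smul_add, sub_eq_add_neg, add_comm]
  refine ⟨_, hint, rfl, ?_, ?_⟩
  · rw [hac, smul_mul_smul_comm, hI']; simp
  · rw [hac, smul_mul_smul_comm, hI]; simp
end

section
/- Let s ≥ 1 and let h ∈ L¹(ℝ^s; ℂ). Then ∫_{ℝ^s} h(p) e^{i t |p|²} dp tends to 0 as t → ∞ (and likewise as t → −∞). -/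
open MeasureTheory Filter Topology

/-- One-dimensional Riemann-Lebesgue with phase `t r²` on the half line. -/
theorem rl_half_line (f : ℝ → ℂ) :
    Tendsto (fun t : ℝ => ∫ r in Set.Ioi (0 : ℝ),
      f r * Complex.exp (Complex.I * (t : ℂ) * ((r ^ 2 : ℝ) : ℂ))) (cocompact ℝ) (𝓝 0) := by
  let g : ℝ → ℂ := (Set.Ioi (0 : ℝ)).indicator
    (fun x => (((1 / 2 : ℝ) * x ^ ((1 / 2 : ℝ) - 1) : ℝ) : ℂ) * f (x ^ (1 / 2 : ℝ)))
  have h1 := Real.tendsto_integral_exp_smul_cocompact g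
  have hc : (-(2 * Real.pi)⁻¹ : ℝ) ≠ 0 := by
    have := Real.pi_pos
    simp [this.ne']
  have h2 : Tendsto (fun t : ℝ => (-(2 * Real.pi)⁻¹ : ℝ) * t) (cocompact ℝ) (cocompact ℝ) :=
    (Homeomorph.mulLeft₀ _ hc).isClosedEmbedding.tendsto_cocompact
  refine (h1.comp h2).congr fun t => ?_
  rw [Function.comp_apply, ← integral_comp_rpow_Ioi_of_pos (p := 1 / 2) (by norm_num),
    ← integral_indicator measurableSet_Ioi]
  refine integral_congr_ae (ae_of_all _ fun x => ?_)
  by_cases hx : x ∈ Set.Ioi (0 : ℝ)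
  · have hsq : (x ^ (1 / 2 : ℝ)) ^ 2 = x := by
      rw [← Real.sqrt_eq_rpow, Real.sq_sqrt (le_of_lt hx)]
    simp only [g, Set.indicator_of_mem hx, hsq, Circle.smul_def, Real.fourierChar_apply,
      smul_eq_mul, Complex.real_smul]
    have : ((2 * Real.pi * -(x * (-(2 * Real.pi)⁻¹ * t)) : ℝ) : ℂ) * Complex.I
        = Complex.I * t * x := by
      have : (2 * Real.pi * -(x * (-(2 * Real.pi)⁻¹ * t)) : ℝ) = t * x := by
        have := Real.pi_pos
        field_simp
      rw [this]; push_cast; ring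
    rw [this]; ring
  · simp [g, Set.indicator_of_notMem hx]

theorem rl_volumeIoiPow (n : ℕ) (f : ℝ → ℂ) :
    Tendsto (fun t : ℝ => ∫ r : Set.Ioi (0 : ℝ),
      f r * Complex.exp (Complex.I * (t : ℂ) * (((r : ℝ) ^ 2 : ℝ) : ℂ)) ∂Measure.volumeIoiPow n)
      (cocompact ℝ) (𝓝 0) := by
  refine (rl_half_line (fun r => ((r ^ n : ℝ) : ℂ) * f r)).congr fun t => ?_
  simp only [Measure.volumeIoiPow, ENNReal.ofReal]
  rw [integral_withDensity_eq_integral_smul,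
    integral_subtype_comap measurableSet_Ioi fun a : ℝ ↦ Real.toNNReal (a ^ n) •
      (f a * Complex.exp (Complex.I * (t : ℂ) * ((a ^ 2 : ℝ) : ℂ)))]
  · refine setIntegral_congr_fun measurableSet_Ioi fun x hx ↦ ?_
    rw [NNReal.smul_def, Real.coe_toNNReal _ (pow_nonneg (le_of_lt hx) _), Complex.real_smul]
    ring
  · exact (measurable_subtype_coe.pow_const _).real_toNNReal

theorem norm_phase (t r : ℝ) : ‖Complex.exp (Complex.I * (t : ℂ) * (r : ℂ))‖ = 1 := by
  rw [mul_assoc, mul_comm, ← Complex.ofReal_mul, Complex.norm_exp_ofReal_mul_I]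

theorem rl_cocompact {E : Type*} [NormedAddCommGroup E] [InnerProductSpace ℝ E]
    [FiniteDimensional ℝ E] [MeasurableSpace E] [BorelSpace E] [Nontrivial E]
    (h : E → ℂ) (hint : Integrable h) :
    Tendsto (fun t : ℝ => ∫ p : E, h p * Complex.exp (Complex.I * (t : ℂ) * ((‖p‖ ^ 2 : ℝ) : ℂ)))
      (cocompact ℝ) (𝓝 0) := by
  set μ : Measure E := volume
  set ν := Measure.volumeIoiPow (Module.finrank ℝ E - 1)
  let H : Metric.sphere (0 : E) 1 × Set.Ioi (0 : ℝ) → ℂ := fun z => h ((z.2 : ℝ) • (z.1 : E))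
  have hmp := μ.measurePreserving_homeomorphUnitSphereProd
  have hback : ∀ x : ({0}ᶜ : Set E), ‖(x : E)‖ • ‖(x : E)‖⁻¹ • (x : E) = x := fun x => by
    rw [smul_smul, mul_inv_cancel₀ (norm_ne_zero_iff.2 x.2), one_smul]
  have hH : Integrable H (μ.toSphere.prod ν) := by
    rw [← hmp.integrable_comp_emb (Homeomorph.measurableEmbedding _)]
    have : H ∘ (homeomorphUnitSphereProd E) = h ∘ Subtype.val := by
      funext x
      simp [H, hback]
    rw [this, ← integrableOn_iff_comap_subtypeVal (by measurability), IntegrableOn,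
      restrict_compl_singleton]
    exact hint
  have hHt : ∀ t : ℝ, Integrable (fun z => H z *
      Complex.exp (Complex.I * (t : ℂ) * (((z.2 : ℝ) ^ 2 : ℝ) : ℂ))) (μ.toSphere.prod ν) := by
    intro t
    refine hH.mul_bdd (c := 1) ?_ (ae_of_all _ fun z => (norm_phase t _).le)
    exact Continuous.aestronglyMeasurable (by fun_prop)
  have key : ∀ t : ℝ, ∫ p : E, h p * Complex.exp (Complex.I * (t : ℂ) * ((‖p‖ ^ 2 : ℝ) : ℂ)) ∂μ
      = ∫ ω, ∫ r, H (ω, r) * Complex.exp (Complex.I * (t : ℂ) * (((r : ℝ) ^ 2 : ℝ) : ℂ)) ∂ν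
          ∂μ.toSphere := by
    intro t
    rw [← integral_prod _ (hHt t), ← hmp.integral_comp (Homeomorph.measurableEmbedding _)]
    conv_lhs => rw [← restrict_compl_singleton (μ := μ) (0 : E),
      ← integral_subtype_comap (measurableSet_singleton _).compl]
    refine integral_congr_ae (ae_of_all _ fun x => ?_)
    simp [H, hback]
  simp only [key]
  rw [← integral_zero (Metric.sphere (0 : E) 1) ℂ (μ := μ.toSphere)]
  have : (cocompact ℝ).IsCountablyGenerated := by
    rw [cocompact_eq_atBot_atTop]; infer_instance
  refine tendsto_integral_filter_of_dominated_convergence (fun ω => ∫ r, ‖H (ω, r)‖ ∂ν)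
    (Eventually.of_forall fun t => (hHt t).integral_prod_left.aestronglyMeasurable)
    (Eventually.of_forall fun t => ae_of_all _ fun ω => ?_) hH.integral_norm_prod_left
    (ae_of_all _ fun ω => rl_volumeIoiPow _ (fun r => h (r • (ω : E))))
  refine (norm_integral_le_integral_norm _).trans (le_of_eq ?_)
  simp only [norm_mul, norm_phase, mul_one]

/-- Riemann–Lebesgue-type decay for the free quadratic dispersion: for `h ∈ L¹(ℝ^s; ℂ)`,
the integral `∫ h(p) e^{it|p|²} dp` tends to `0` as `t → ∞` and as `t → −∞`. -/
theorem riemann_lebesgue_quadratic_dispersion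
    (s : ℕ) (hs : 1 ≤ s)
    (h : EuclideanSpace ℝ (Fin s) → ℂ) (hint : Integrable h) :
    Tendsto
      (fun t : ℝ => ∫ p : EuclideanSpace ℝ (Fin s),
        h p * Complex.exp (Complex.I * (t : ℂ) * ((‖p‖ ^ 2 : ℝ) : ℂ)))
      atTop (𝓝 0) ∧
    Tendsto
      (fun t : ℝ => ∫ p : EuclideanSpace ℝ (Fin s),
        h p * Complex.exp (Complex.I * (t : ℂ) * ((‖p‖ ^ 2 : ℝ) : ℂ)))
      atBot (𝓝 0) := by
  have : Nontrivial (EuclideanSpace ℝ (Fin s)) := by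
    apply Module.nontrivial_of_finrank_pos (R := ℝ)
    rw [finrank_euclideanSpace_fin]
    exact hs
  have := rl_cocompact h hint
  rw [cocompact_eq_atBot_atTop, tendsto_sup] at this
  exact ⟨this.2, this.1⟩
end

section
/- Let s ∈ {1, 2} and let f ∈ L¹(ℝ^s; ℂ) ∩ L²(ℝ^s; ℂ). If ∫_{ℝ^s} |f̂(p)|² |p|^{-2} dp < ∞, where f̂ denotes the Fourier transform of f, then ∫_{ℝ^s} f(x) dx = 0, i.e. f̂(0) = 0. -/
open MeasureTheory

/-- In dimensions `s = 1, 2`: if `f ∈ L¹ ∩ L²` and its Fourier transform lies in the domain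
of `|P|⁻¹`, i.e. `∫ |f̂(p)|² |p|⁻² dp < ∞`, then `f` has vanishing mean, `∫ f = 0`. -/
theorem low_dim_domain_implies_zero_mean
    (s : ℕ) (hs : s = 1 ∨ s = 2)
    (f : EuclideanSpace ℝ (Fin s) → ℂ)
    (hf1 : Integrable f)
    (hf2 : MemLp f 2 (volume : Measure (EuclideanSpace ℝ (Fin s))))
    (hdom : (∫⁻ p : EuclideanSpace ℝ (Fin s),
        ENNReal.ofReal (‖FourierTransform.fourier f p‖ ^ 2 * (‖p‖ ^ 2)⁻¹)) < ⊤) :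
    ∫ x : EuclideanSpace ℝ (Fin s), f x = 0 := by
  have hs0 : s ≠ 0 := by omega
  haveI : Nonempty (Fin s) := ⟨⟨0, by omega⟩⟩
  have hcont : Continuous (FourierTransform.fourier f) :=
    VectorFourier.fourierIntegral_continuous Real.continuous_fourierChar
      (by exact continuous_inner) hf1
  have h0 : FourierTransform.fourier f 0 = ∫ x, f x := by
    simp [Real.fourier_eq]
  rw [← h0]
  by_contra hne
  set c := ‖FourierTransform.fourier f 0‖ ^ 2 with hc
  have hcpos : 0 < c := by positivity
  have hev : ∀ᶠ p in nhds (0 : EuclideanSpace ℝ (Fin s)),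
      c / 2 < ‖FourierTransform.fourier f p‖ ^ 2 := by
    have : ContinuousAt (fun p => ‖FourierTransform.fourier f p‖ ^ 2) 0 := by
      exact (hcont.norm.pow 2).continuousAt
    exact this.eventually (lt_mem_nhds (by simp only [← hc]; linarith))
  obtain ⟨δ, hδ, hball⟩ := Metric.eventually_nhds_iff_ball.1 hev
  set V := volume (Metric.ball (0 : EuclideanSpace ℝ (Fin s)) 1) with hV
  have hVpos : 0 < V := Metric.measure_ball_pos _ _ one_pos
  have hVfin : V ≠ ⊤ := measure_ball_lt_top.ne
  have hvol : ∀ r : ℝ, 0 ≤ r → volume (Metric.ball (0 : EuclideanSpace ℝ (Fin s)) r)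
      = ENNReal.ofReal (r ^ s) * V := by
    intro r hr
    rw [Measure.addHaar_ball _ _ hr]
    simp [hV]
  have ht0 : Filter.Tendsto (fun r : ℝ => volume (Metric.ball (0 : EuclideanSpace ℝ (Fin s)) r))
      (nhdsWithin 0 (Set.Ioi 0)) (nhds 0) := by
    have h1 : Filter.Tendsto (fun r : ℝ => ENNReal.ofReal (r ^ s) * V)
        (nhdsWithin 0 (Set.Ioi 0)) (nhds 0) := by
      have h2 : Filter.Tendsto (fun r : ℝ => ENNReal.ofReal (r ^ s))
          (nhdsWithin 0 (Set.Ioi 0)) (nhds 0) := by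
        have : Continuous (fun r : ℝ => ENNReal.ofReal (r ^ s)) := ENNReal.continuous_ofReal.comp (continuous_pow s)
        have := this.tendsto 0
        simp [hs0] at this
        exact this.mono_left nhdsWithin_le_nhds
      simpa using ENNReal.Tendsto.mul_const h2 (Or.inr hVfin)
    refine h1.congr' ?_
    filter_upwards [self_mem_nhdsWithin] with r hr
    exact (hvol r (le_of_lt hr)).symm
  have ht := tendsto_setLIntegral_zero hdom.ne ht0
  have hK : 0 < ENNReal.ofReal (c / 2) * V :=
    ENNReal.mul_pos (by simpa using hcpos) hVpos.ne'
  have hmin : 0 < min δ 1 := lt_min hδ one_pos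
  have hIoo := Ioo_mem_nhdsGT hmin
  obtain ⟨r, hlt, hr0, hr1⟩ := ((ht.eventually (gt_mem_nhds hK)).and hIoo).exists
  have hrδ : r < δ := hr1.trans_le (min_le_left _ _)
  have hr1' : r < 1 := hr1.trans_le (min_le_right _ _)
  refine absurd hlt (not_lt.2 ?_)
  have hrs : r ^ 2 ≤ r ^ s := pow_le_pow_of_le_one hr0.le hr1'.le (by omega)
  calc ENNReal.ofReal (c / 2) * V
      ≤ ENNReal.ofReal (c / 2 * (r ^ 2)⁻¹) * (ENNReal.ofReal (r ^ s) * V) := by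
        rw [← mul_assoc, ← ENNReal.ofReal_mul (by positivity)]
        gcongr
        have : 1 ≤ (r ^ 2)⁻¹ * r ^ s := by
          rw [inv_mul_eq_div, one_le_div (by positivity)]; exact hrs
        nlinarith
    _ = ∫⁻ p in Metric.ball (0 : EuclideanSpace ℝ (Fin s)) r,
          ENNReal.ofReal (c / 2 * (r ^ 2)⁻¹) := by
        rw [setLIntegral_const, hvol r hr0.le]
    _ ≤ _ := by
        apply lintegral_mono_ae
        have hnz : ∀ᵐ p ∂(volume : Measure (EuclideanSpace ℝ (Fin s))), p ≠ 0 :=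
          Measure.ae_ne volume 0
        filter_upwards [ae_restrict_mem Metric.isOpen_ball.measurableSet,
          ae_restrict_of_ae hnz] with p hp hp0
        have hpn : 0 < ‖p‖ := norm_pos_iff.2 hp0
        have hpr : ‖p‖ < r := by simpa using hp
        have := hball p (Metric.ball_subset_ball hrδ.le hp)
        gcongr
end
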